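/- Let n ≥ 3, let D be a rich domain, and let f : D^n → M be an efficient, individually rational and obviously strategy-proof rule satisfying equity under unanimous acclaim. For any three distinct objects o_i, o_j, o_k ∈ O with o_i ∼ o_j and o_j ∼ o_k (connected in D), the ternary relation (o_i, o_j, o_k) belongs to B(D), i.e., both →(o_i, o_j, o_k) ∈ R(D) and →(o_k, o_j, o_i) ∈ R(D). -/

import Mathlib

/-!
The proof isolates three agents and exhibits a market that no obviously strategy-proof game can
implement. Write `x, y, z` for `oi, oj, ok`. All other agents are given preferences topped by their
own endowments (path-connectedness supplies these), so individual rationality makes them keep their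
objects and `oi, oj, ok` permute `x, y, z` among themselves.

Connectedness yields `A ∈ D` with `y, x` on top (in this order) and `B ∈ D` with `z, y` on top.
Suppose some `p ∈ D` violates `RestrR D x y z`, so that `p` ranks `x` over `z` over `y`. Restrict
`oi` to `{A, B}`, `oj` to `{B, p}` and `ok` to `{p, A}`. Listing the objects obtained by
`oi, oj, ok` in order, the axioms force four outcomes:

* `f (A, B, p) = (y, z, x)`, by efficiency;
* `f (B, B, A) = (x, z, y)`, by equity with `ok` acclaimed;
* `f (B, p, p) = (z, y, x)`, by equity with `oi` acclaimed;
* `f (A, p, A) = (y, x, z)`, by equity with `oj` acclaimed.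

In an obviously strategy-proof implementation the play is common to all profiles of this product
until some agent's two preferences first choose different actions (`osp_split`). The outcomes differ,
so such a node exists, and there the worst outcome of each preference is weakly better than the best
outcome of the other one. The first outcome, compared with the second, third and fourth
respectively, rules out `oi`, `oj` and `ok` as the agent moving there (`restr_of_connected`).
The other half of `RelB` is the same statement with `oi` and `ok` exchanged.
-/

/-- A preference is a strict linear order on the objects `Fin n`, encoded by its
rank function: `p o < p o'` means object `o` is strictly preferred to `o'`. -/
abbrev Pref (n : ℕ) := Fin n ≃ Fin n

/-- `o` is strictly preferred to `o'` under `p`. -/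
def prefers {n : ℕ} (p : Pref n) (o o' : Fin n) : Prop := p o < p o'

/-- `o` is weakly preferred to `o'` under `p` (i.e. `o P o'` or `o = o'`). -/
def weakPref {n : ℕ} (p : Pref n) (o o' : Fin n) : Prop := p o ≤ p o'

/-- The top-ranked object `r_1(p)`. -/
def topObj {n : ℕ} [NeZero n] (p : Pref n) : Fin n := p.symm 0

/-- The second-ranked object `r_2(p)`. -/
def secondObj {n : ℕ} [NeZero n] (p : Pref n) : Fin n := p.symm 1

/-- The `p`-best object of a (nonempty) finite set `S`: `max^p S`. -/
noncomputable def best {n : ℕ} [NeZero n] (p : Pref n) (S : Finset (Fin n)) : Fin n :=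
  (S.toList.argmin (fun o => p o)).getD 0

/-- A profile belongs to the domain `D` coordinatewise. -/
def inD {n : ℕ} (D : Set (Pref n)) (P : Fin n → Pref n) : Prop := ∀ i, P i ∈ D

/-- Individual rationality of an allocation at a profile: each agent `i` weakly
prefers her assigned object to her endowment `o_i = i`. -/
def IRAt {n : ℕ} (P : Fin n → Pref n) (m : Fin n → Fin n) : Prop :=
  ∀ i, weakPref (P i) (m i) i

/-- `m'` Pareto dominates `m` at profile `P`. -/
def ParetoDom {n : ℕ} (P : Fin n → Pref n) (m' m : Fin n → Fin n) : Prop :=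
  (∀ i, weakPref (P i) (m' i) (m i)) ∧ ∃ j, prefers (P j) (m' j) (m j)

/-- Pareto efficiency of an allocation at a profile. -/
def EffAt {n : ℕ} (P : Fin n → Pref n) (m : Fin n → Fin n) : Prop :=
  ¬ ∃ m' : Fin n → Fin n, Function.Bijective m' ∧ ParetoDom P m' m

/-- A rule maps profiles from the domain to allocations (bijections `N → O`). -/
def IsRule {n : ℕ} (D : Set (Pref n)) (f : (Fin n → Pref n) → (Fin n → Fin n)) : Prop :=
  ∀ P, inD D P → Function.Bijective (f P)

def Efficient {n : ℕ} (D : Set (Pref n)) (f : (Fin n → Pref n) → (Fin n → Fin n)) : Prop :=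
  ∀ P, inD D P → EffAt P (f P)

def IndRational {n : ℕ} (D : Set (Pref n)) (f : (Fin n → Pref n) → (Fin n → Fin n)) : Prop :=
  ∀ P, inD D P → IRAt P (f P)

def StrategyProof {n : ℕ} (D : Set (Pref n)) (f : (Fin n → Pref n) → (Fin n → Fin n)) : Prop :=
  ∀ P, inD D P → ∀ i, ∀ p' ∈ D, weakPref (P i) (f P i) (f (Function.update P i p') i)

/-- The active agents at profile `P` (those whose top object differs from their
endowment); since `o_i = i`, the set of active objects coincides with it. -/
def activeAgents {n : ℕ} [NeZero n] (P : Fin n → Pref n) : Finset (Fin n) :=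
  Finset.univ.filter (fun i => topObj (P i) ≠ i)

/-- Agent `i` is the acclaimed agent at profile `P`. -/
def acclaimed {n : ℕ} [NeZero n] (P : Fin n → Pref n) (i : Fin n) : Prop :=
  2 < (activeAgents P).card ∧ i ∈ activeAgents P ∧
    best (P i) (activeAgents P) ≠ i ∧
    ∀ j ∈ activeAgents P, j ≠ i → best (P j) (activeAgents P) = i

/-- Equity under unanimous acclaim. -/
def EquityUA {n : ℕ} [NeZero n] (D : Set (Pref n))
    (f : (Fin n → Pref n) → (Fin n → Fin n)) : Prop :=
  ∀ P, inD D P → ∀ i, acclaimed P i → f P i = best (P i) (activeAgents P)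

/-- Agents `i` and `j` form the acclaimed pair at profile `P`. -/
def acclaimedPair {n : ℕ} [NeZero n] (P : Fin n → Pref n) (i j : Fin n) : Prop :=
  ∃ Ni Nj : Finset (Fin n),
    Disjoint Ni Nj ∧ Ni ∪ Nj = activeAgents P ∧ Ni.card = Nj.card ∧ 1 < Ni.card ∧
    i ∈ Nj ∧ j ∈ Ni ∧
    (∀ l ∈ Ni, best (P l) (activeAgents P) = i) ∧
    (∀ l ∈ Nj, best (P l) (activeAgents P) = j)

/-- Equity under bipartite acclaim. -/
def EquityBA {n : ℕ} [NeZero n] (D : Set (Pref n))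
    (f : (Fin n → Pref n) → (Fin n → Fin n)) : Prop :=
  ∀ P, inD D P → ∀ i j, acclaimedPair P i j → f P i = j ∨ f P j = i

/-- Equity⁺ under bipartite acclaim. -/
def EquityPlusBA {n : ℕ} [NeZero n] (D : Set (Pref n))
    (f : (Fin n → Pref n) → (Fin n → Fin n)) : Prop :=
  ∀ P, inD D P → ∀ i j, acclaimedPair P i j → f P i = j ∧ f P j = i

/-- Single-peakedness of `p` w.r.t. the linear order on objects encoded by the
position permutation `σ` (`o < o'` iff `σ o < σ o'`). -/
def singlePeaked {n : ℕ} [NeZero n] (σ : Fin n ≃ Fin n) (p : Pref n) : Prop :=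
  ∀ o o' : Fin n,
    ((σ o' < σ o ∧ σ o < σ (topObj p)) ∨ (σ (topObj p) < σ o ∧ σ o < σ o')) →
    prefers p o o'

/-- The full single-peaked domain `D_<`. -/
def spDomain {n : ℕ} [NeZero n] (σ : Fin n ≃ Fin n) : Set (Pref n) :=
  {p | singlePeaked σ p}

/-- `D` is a single-peaked domain. -/
def IsSPDomain {n : ℕ} [NeZero n] (D : Set (Pref n)) : Prop :=
  ∃ σ : Fin n ≃ Fin n, D ⊆ spDomain σ

/-- Objects `o` and `o'` are connected in `D`: `o ∼ o'`. -/
def connectedObj {n : ℕ} [NeZero n] (D : Set (Pref n)) (o o' : Fin n) : Prop :=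
  ∃ p ∈ D, ∃ p' ∈ D, topObj p = o ∧ secondObj p = o' ∧ topObj p' = o' ∧ secondObj p' = o

/-- `D` is path-connected. -/
def pathConnected {n : ℕ} [NeZero n] (D : Set (Pref n)) : Prop :=
  ∀ o o' : Fin n, o ≠ o' → ∃ l : List (Fin n),
    l.Nodup ∧ l.head? = some o ∧ l.getLast? = some o' ∧ l.Chain' (connectedObj D)

/-- `p` and `p'` rank all objects in exactly opposite orders. -/
def reversedPair {n : ℕ} (p p' : Pref n) : Prop :=
  ∀ o o', prefers p o o' ↔ prefers p' o' o

/-- A rich domain: path-connected and containing two completely reversed preferences. -/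
def richDomain {n : ℕ} [NeZero n] (D : Set (Pref n)) : Prop :=
  pathConnected D ∧ ∃ p ∈ D, ∃ p' ∈ D, reversedPair p p'

/-- The restriction `→(x,y,z) ∈ R(D)`: whenever `x` is the best of `{x,y,z}`,
`y` is ranked above `z`. -/
def RestrR {n : ℕ} [NeZero n] (D : Set (Pref n)) (x y z : Fin n) : Prop :=
  ∀ p ∈ D, best p {x, y, z} = x → prefers p y z

/-- The ternary relation `(x,y,z) ∈ B(D)`. -/
def RelB {n : ℕ} [NeZero n] (D : Set (Pref n)) (x y z : Fin n) : Prop :=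
  RestrR D x y z ∧ RestrR D z y x

/-! ### Extensive game forms and obvious strategy-proofness -/

/-- An extensive game form: a finite rooted tree of histories (lists of actions,
prefix-closed), a player function and an outcome function on terminal histories. -/
structure GameForm (n : ℕ) where
  hist : Finset (List ℕ)
  root_mem : [] ∈ hist
  prefix_closed : ∀ h a, h ++ [a] ∈ hist → h ∈ hist
  player : List ℕ → Fin n
  outcome : List ℕ → (Fin n → Fin n)

/-- A strategy chooses an action at every history. -/
abbrev Strategy : Type := List ℕ → ℕ

/-- Terminal histories of the game form. -/
def GameForm.Terminal {n : ℕ} (Γ : GameForm n) (h : List ℕ) : Prop :=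
  h ∈ Γ.hist ∧ ∀ a, h ++ [a] ∉ Γ.hist

/-- A strategy of agent `i` is valid if it always chooses a feasible action. -/
def GameForm.ValidStrat {n : ℕ} (Γ : GameForm n) (i : Fin n) (s : Strategy) : Prop :=
  ∀ h ∈ Γ.hist, ¬ Γ.Terminal h → Γ.player h = i → h ++ [s h] ∈ Γ.hist

/-- Play from `h` under the strategy profile `s` reaches history `h'`. -/
inductive GameForm.Reaches {n : ℕ} (Γ : GameForm n) (s : Fin n → Strategy) :
    List ℕ → List ℕ → Prop
  | refl (h : List ℕ) : GameForm.Reaches Γ s h h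
  | step {h h' : List ℕ} : GameForm.Reaches Γ s h h' → h' ∈ Γ.hist → ¬ Γ.Terminal h' →
      GameForm.Reaches Γ s h (h' ++ [s (Γ.player h') h'])

/-- `o` belongs to the feasible set `X_i(h, s_i)` of agent `i` at history `h`
given her strategy `si`. -/
def GameForm.Feas {n : ℕ} (Γ : GameForm n) (i : Fin n) (h : List ℕ) (si : Strategy)
    (o : Fin n) : Prop :=
  ∃ s : Fin n → Strategy, (∀ j, Γ.ValidStrat j (s j)) ∧ s i = si ∧
    ∃ t, Γ.Reaches s h t ∧ Γ.Terminal t ∧ Γ.outcome t i = o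

/-- `h` is a decision node of `i` reachable (on-path) when `i` plays `si`. -/
def GameForm.ReachableNode {n : ℕ} (Γ : GameForm n) (i : Fin n) (si : Strategy)
    (h : List ℕ) : Prop :=
  h ∈ Γ.hist ∧ ¬ Γ.Terminal h ∧ Γ.player h = i ∧
    ∃ s : Fin n → Strategy, (∀ j, Γ.ValidStrat j (s j)) ∧ s i = si ∧ Γ.Reaches s [] h

/-- `si` obviously dominates `si'` at preference `p`: at every earliest point of
departure, the worst feasible outcome under `si` is weakly preferred to the best
feasible outcome under `si'`. -/
def GameForm.ObvDom {n : ℕ} (Γ : GameForm n) (i : Fin n) (p : Pref n)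
    (si si' : Strategy) : Prop :=
  ∀ h, Γ.ReachableNode i si h → Γ.ReachableNode i si' h → si h ≠ si' h →
    ∀ o o', Γ.Feas i h si o → Γ.Feas i h si' o' → weakPref p o o'

/-- Obvious strategy-proofness of a rule `f` on domain `D`. -/
def OSP {n : ℕ} (D : Set (Pref n)) (f : (Fin n → Pref n) → (Fin n → Fin n)) : Prop :=
  ∃ (Γ : GameForm n) (S : Fin n → Pref n → Strategy),
    (∀ i p, p ∈ D → Γ.ValidStrat i (S i p)) ∧
    (∀ i p, p ∈ D → ∀ s', Γ.ValidStrat i s' → Γ.ObvDom i p (S i p) s') ∧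
    (∀ P : Fin n → Pref n, inD D P →
      ∃ t, Γ.Reaches (fun j => S j (P j)) [] t ∧ Γ.Terminal t ∧ Γ.outcome t = f P)

/-! ### The crawler, the designator, and top trading cycles -/

/-- The running state of the crawler/designator algorithms: the sub-allocation of
objects currently held by remaining agents, and the final assignments so far. -/
structure AlgState (n : ℕ) where
  held : Fin n → Option (Fin n)
  res : Fin n → Option (Fin n)

/-- The object currently held by agent `i`. -/
def heldObj {n : ℕ} [NeZero n] (st : AlgState n) (i : Fin n) : Fin n := (st.held i).getD 0

/-- The remaining agents. -/
def remAgents {n : ℕ} (st : AlgState n) : Finset (Fin n) :=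
  Finset.univ.filter (fun i => (st.held i).isSome)

/-- The remaining objects. -/
def remObjs {n : ℕ} [NeZero n] (st : AlgState n) : Finset (Fin n) :=
  (remAgents st).image (heldObj st)

/-- The object of `S` adjacently larger than `o` w.r.t. the order `σ`. -/
noncomputable def adjLarger {n : ℕ} (σ : Fin n ≃ Fin n) (S : Finset (Fin n)) (o : Fin n) : Fin n :=
  ((S.filter (fun o' => σ o < σ o')).toList.argmin (fun o' => σ o')).getD o

/-- The agent `i^s` leaving at the current step: the remaining agent holding the
`σ`-smallest object among those whose best remaining object is weakly below their
held object. -/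
noncomputable def leaver {n : ℕ} [NeZero n] (σ : Fin n ≃ Fin n) (P : Fin n → Pref n)
    (st : AlgState n) : Option (Fin n) :=
  ((remAgents st).filter
      (fun i => σ (best (P i) (remObjs st)) ≤ σ (heldObj st i))).toList.argmin
    (fun i => σ (heldObj st i))

/-- One step of the crawler: the leaving agent takes her best remaining object,
and every remaining agent holding an object weakly above the taken object and
strictly below the leaver's object crawls to the adjacently larger object. -/
noncomputable def crawlerStep {n : ℕ} [NeZero n] (σ : Fin n ≃ Fin n) (P : Fin n → Pref n)
    (st : AlgState n) : AlgState n :=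
  match leaver σ P st with
  | none => st
  | some is =>
    let taken := best (P is) (remObjs st)
    { held := fun j =>
        if j = is then none
        else if (st.held j).isSome = true ∧ σ taken ≤ σ (heldObj st j) ∧
            σ (heldObj st j) < σ (heldObj st is) then
          some (adjLarger σ (remObjs st) (heldObj st j))
        else st.held j,
      res := Function.update st.res is (some taken) }

/-- Initially every agent holds her endowment `o_i = i`. -/
def crawlerInit (n : ℕ) : AlgState n := ⟨fun i => some i, fun _ => none⟩

/-- The crawler rule w.r.t. the object order `σ`. -/
noncomputable def crawler {n : ℕ} [NeZero n] (σ : Fin n ≃ Fin n) (P : Fin n → Pref n) :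
    Fin n → Fin n :=
  fun i => (((crawlerStep σ P)^[n] (crawlerInit n)).res i).getD 0

/-- `τ(i)`: the active agent whose endowment is `max^{P_i} O_{m̄⁰}`. -/
noncomputable def desTau {n : ℕ} [NeZero n] (P : Fin n → Pref n) (i : Fin n) : Fin n :=
  best (P i) (activeAgents P)

/-- Stage I of the designator: null agents receive their endowments and leave. -/
def desInit {n : ℕ} [NeZero n] (P : Fin n → Pref n) : AlgState n :=
  { held := fun i => if topObj (P i) = i then none else some i,
    res := fun i => if topObj (P i) = i then some i else none }

/-- One step of Stage II of the designator: the leaving agent `i^s` takes her best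
remaining object; if `τ(i^s)` is remaining and holds an object weakly above the
taken object and strictly below `i^s`'s held object, then `τ(i^s)` directly
inherits `i^s`'s object and only agents below `τ(i^s)` crawl (designating);
otherwise the crawling updating applies. -/
noncomputable def desStep {n : ℕ} [NeZero n] (σ : Fin n ≃ Fin n) (P : Fin n → Pref n)
    (st : AlgState n) : AlgState n :=
  match leaver σ P st with
  | none => st
  | some is =>
    let taken := best (P is) (remObjs st)
    let t := desTau P is
    if (st.held t).isSome = true ∧ σ taken ≤ σ (heldObj st t) ∧
        σ (heldObj st t) < σ (heldObj st is) then
      { held := fun j =>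
          if j = is then none
          else if j = t then some (heldObj st is)
          else if (st.held j).isSome = true ∧ σ taken ≤ σ (heldObj st j) ∧
              σ (heldObj st j) < σ (heldObj st t) then
            some (adjLarger σ (remObjs st) (heldObj st j))
          else st.held j,
        res := Function.update st.res is (some taken) }
    else
      { held := fun j =>
          if j = is then none
          else if (st.held j).isSome = true ∧ σ taken ≤ σ (heldObj st j) ∧
              σ (heldObj st j) < σ (heldObj st is) then
            some (adjLarger σ (remObjs st) (heldObj st j))
          else st.held j,
        res := Function.update st.res is (some taken) }

/-- The designator rule w.r.t. the object order `σ`. -/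
noncomputable def designator {n : ℕ} [NeZero n] (σ : Fin n ≃ Fin n) (P : Fin n → Pref n) :
    Fin n → Fin n :=
  fun i => (((desStep σ P)^[n] (desInit P)).res i).getD 0

/-- One round of top trading cycles: every remaining agent points to the owner of
her favorite remaining object (owner of object `o` is agent `o`), and every agent
lying on a pointing cycle receives the object she points to and leaves. -/
noncomputable def ttcStep {n : ℕ} [NeZero n] (P : Fin n → Pref n) (res : Fin n → Option (Fin n)) :
    Fin n → Option (Fin n) :=
  let rem : Finset (Fin n) := Finset.univ.filter (fun i => res i = none)
  let pt : Fin n → Fin n := fun i => best (P i) rem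
  fun i =>
    match res i with
    | some o => some o
    | none =>
      if (List.range (n + 1)).any (fun k => (k != 0) && (pt^[k] i == i)) then some (pt i)
      else none

/-- The top-trading-cycle rule. -/
noncomputable def ttc {n : ℕ} [NeZero n] (P : Fin n → Pref n) : Fin n → Fin n :=
  fun i => (((ttcStep P)^[n] (fun _ => none)) i).getD 0

/-! ### Play of a strategy profile -/

lemma reaches_head {n : ℕ} {Γ : GameForm n} {s : Fin n → Strategy} {a b : List ℕ}
    (h : Γ.Reaches s a b) : b = a ∨ Γ.Reaches s (a ++ [s (Γ.player a) a]) b := by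
  induction h with
  | refl => exact Or.inl rfl
  | step hr hm ht ih =>
    rcases ih with rfl | ih
    · exact Or.inr (.refl _)
    · exact Or.inr (.step ih hm ht)

/-- Play is deterministic, so two histories reached from the same one are comparable. -/
lemma reaches_linear {n : ℕ} {Γ : GameForm n} {s : Fin n → Strategy} {r a b : List ℕ}
    (ha : Γ.Reaches s r a) (hb : Γ.Reaches s r b) : Γ.Reaches s a b ∨ Γ.Reaches s b a := by
  induction ha with
  | refl => exact Or.inl hb
  | step hr hm ht ih =>
    rcases ih with ih | ih
    · rcases reaches_head ih with rfl | h
      · exact Or.inr (.step (.refl _) hm ht)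
      · exact Or.inl h
    · exact Or.inr (.step ih hm ht)

lemma reaches_from_terminal {n : ℕ} {Γ : GameForm n} {s : Fin n → Strategy} {a b : List ℕ}
    (h : Γ.Reaches s a b) (ht : Γ.Terminal a) : b = a := by
  induction h with
  | refl => rfl
  | step _ _ hnt ih => subst ih; exact absurd ht hnt

lemma reaches_terminal {n : ℕ} {Γ : GameForm n} {s : Fin n → Strategy} {r a t : List ℕ}
    (ha : Γ.Reaches s r a) (ht : Γ.Reaches s r t) (hterm : Γ.Terminal t) :
    Γ.Reaches s a t := by
  rcases reaches_linear ha ht with h | h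
  · exact h
  · rw [reaches_from_terminal h hterm]; exact .refl _

/-! ### The first divergence in an obviously strategy-proof game -/

/-- `P` belongs to the product domain in which agent `j` reports `u j` or `w j`. -/
def Mixed {n : ℕ} (u w P : Fin n → Pref n) : Prop := ∀ j, P j = u j ∨ P j = w j

lemma Mixed.inD {n : ℕ} {D : Set (Pref n)} {u w P : Fin n → Pref n} (hu : inD D u)
    (hw : inD D w) (h : Mixed u w P) : inD D P := fun j => by
  rcases h j with e | e <;> rw [e]
  exacts [hu j, hw j]

/-- On a product of two-element preference sets, an obviously strategy-proof rule is either constant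
or has an agent `i` for whom every outcome under each of her two preferences is weakly better,
according to that preference, than every outcome under the other one. -/
lemma osp_split {n : ℕ} {D : Set (Pref n)} {f : (Fin n → Pref n) → (Fin n → Fin n)}
    (hosp : OSP D f) (u w : Fin n → Pref n) (hu : inD D u) (hw : inD D w) :
    (∀ P, Mixed u w P → f P = f u) ∨
    ∃ i, u i ≠ w i ∧ ∀ P P', Mixed u w P → Mixed u w P' → P i = u i → P' i = w i →
      weakPref (u i) (f P i) (f P' i) ∧ weakPref (w i) (f P' i) (f P i) := by
  obtain ⟨Γ, S, hval, hdom, hout⟩ := hosp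
  -- Either the whole play of `u` is common to all mixed profiles, or they split at some node.
  have key : ∀ h, Γ.Reaches (fun j => S j (u j)) [] h →
      (∀ P, Mixed u w P → Γ.Reaches (fun j => S j (P j)) [] h) ∨
      ∃ h, h ∈ Γ.hist ∧ ¬ Γ.Terminal h ∧
        (∀ P, Mixed u w P → Γ.Reaches (fun j => S j (P j)) [] h) ∧
        S (Γ.player h) (u (Γ.player h)) h ≠ S (Γ.player h) (w (Γ.player h)) h := by
    intro h hr
    induction hr with
    | refl => exact Or.inl fun P _ => .refl _
    | @step h' hr hm ht ih =>
      rcases ih with ih | ih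
      · by_cases hne : S (Γ.player h') (u (Γ.player h')) h' =
          S (Γ.player h') (w (Γ.player h')) h'
        · left
          intro P hP
          have hs := GameForm.Reaches.step (ih P hP) hm ht
          have he : S (Γ.player h') (P (Γ.player h')) h' =
              S (Γ.player h') (u (Γ.player h')) h' := by
            rcases hP (Γ.player h') with e | e <;> rw [e]
            exact hne.symm
          simpa only [he] using hs
        · exact Or.inr ⟨h', hm, ht, ih, hne⟩
      · exact Or.inr ih
  obtain ⟨t, htr, htt, hto⟩ := hout u hu
  rcases key t htr with hall | ⟨h, hm, hnt, hall, hne⟩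
  · left
    intro P hP
    obtain ⟨t', hr', ht', ho'⟩ := hout P (hP.inD hu hw)
    have := reaches_from_terminal (reaches_terminal (hall P hP) hr' ht') htt
    rw [← ho', ← hto, this]
  · right
    refine ⟨Γ.player h, fun e => hne (by rw [e]), fun P P' hP hP' e e' => ?_⟩
    -- Truthful continuations from `h` witness feasibility of the outcomes of `f`.
    have hfeas : ∀ Q, Mixed u w Q →
        Γ.Feas (Γ.player h) h (S (Γ.player h) (Q (Γ.player h))) (f Q (Γ.player h)) ∧
        Γ.ReachableNode (Γ.player h) (S (Γ.player h) (Q (Γ.player h))) h := by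
      intro Q hQ
      have hQD := hQ.inD hu hw
      obtain ⟨t', hr', ht', ho'⟩ := hout Q hQD
      refine ⟨⟨fun j => S j (Q j), fun j => hval j _ (hQD j), rfl, t',
        reaches_terminal (hall Q hQ) hr' ht', ht', by rw [ho']⟩,
        hm, hnt, rfl, fun j => S j (Q j), fun j => hval j _ (hQD j), rfl, hall Q hQ⟩
    obtain ⟨f1, r1⟩ := hfeas P hP
    obtain ⟨f2, r2⟩ := hfeas P' hP'
    rw [e] at f1 r1
    rw [e'] at f2 r2
    exact ⟨hdom _ _ (hu _) _ (hval _ _ (hw _)) h r1 r2 hne _ _ f1 f2,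
      hdom _ _ (hw _) _ (hval _ _ (hu _)) h r2 r1 hne.symm _ _ f2 f1⟩

/-! ### Preferences and best objects -/

lemma best_spec {n : ℕ} [NeZero n] (p : Pref n) {S : Finset (Fin n)} (hS : S.Nonempty) :
    best p S ∈ S ∧ ∀ y ∈ S, p (best p S) ≤ p y := by
  unfold best
  cases h : S.toList.argmin (fun o => p o) with
  | none =>
    rw [List.argmin_eq_none, Finset.toList_eq_nil] at h
    exact absurd h hS.ne_empty
  | some m =>
    refine ⟨Finset.mem_toList.mp (List.argmin_mem h), fun y hy => ?_⟩
    exact List.le_of_mem_argmin (f := fun o => p o) (Finset.mem_toList.mpr hy) h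

lemma best_eq {n : ℕ} [NeZero n] {p : Pref n} {S : Finset (Fin n)} {x : Fin n} (hx : x ∈ S)
    (h : ∀ y ∈ S, p x ≤ p y) : best p S = x := by
  obtain ⟨h1, h2⟩ := best_spec p ⟨x, hx⟩
  exact p.injective (le_antisymm (h2 x hx) (h _ h1))

lemma topObj_ne {n : ℕ} [NeZero n] {p : Pref n} {o o' : Fin n} (h : p o < p o') :
    topObj p ≠ o' := by
  rintro rfl
  simp [topObj] at h

lemma top_second_lt {n : ℕ} [NeZero n] (hn : 3 ≤ n) {p : Pref n} {a b c : Fin n}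
    (ha : topObj p = a) (hb : secondObj p = b) (hac : a ≠ c) (hbc : b ≠ c) :
    p a < p b ∧ p b < p c := by
  have e0 : p a = 0 := by rw [← ha]; simp [topObj]
  have e1 : p b = 1 := by rw [← hb]; simp [secondObj]
  have v0 : ((0 : Fin n) : ℕ) = 0 := Fin.val_zero n
  have v1 : ((1 : Fin n) : ℕ) = 1 := by rw [Fin.val_one']; exact Nat.mod_eq_of_lt (by omega)
  have c0 : p c ≠ 0 := fun h => hac (p.injective (e0.trans h.symm))
  have c1 : p c ≠ 1 := fun h => hbc (p.injective (e1.trans h.symm))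
  rw [e0, e1]
  simp only [Fin.lt_def, ne_eq, Fin.ext_iff, v0, v1] at *
  omega

/-- In a path-connected domain with at least two objects, every object is top-ranked somewhere. -/
lemma exists_top {n : ℕ} [NeZero n] {D : Set (Pref n)} (hD : pathConnected D) (o : Fin n)
    {o' : Fin n} (hne : o ≠ o') : ∃ p ∈ D, topObj p = o := by
  obtain ⟨l, -, hh, hl, hc⟩ := hD o o' hne
  match l, hh, hl, hc with
  | [], hh, _, _ => simp at hh
  | [a], hh, hl, _ => simp at hh hl; exact absurd (hh.symm.trans hl) hne
  | a :: b :: l, hh, _, hc =>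
    obtain ⟨p, hp, -, -, ht, -⟩ := (List.isChain_cons_cons.mp hc).1
    simp at hh
    exact ⟨p, hp, ht.trans hh⟩

/-! ### Three-agent markets -/

/-- The profile where `i`, `j`, `k` report `p`, `q`, `r` and every other agent `l` reports `N l`. -/
def prof3 {n : ℕ} (N : Fin n → Pref n) (i j k : Fin n) (p q r : Pref n) : Fin n → Pref n :=
  fun l => if l = i then p else if l = j then q else if l = k then r else N l

section Market

variable {n : ℕ} [NeZero n] {D : Set (Pref n)} {f : (Fin n → Pref n) → (Fin n → Fin n)}
  {i j k : Fin n} {P : Fin n → Pref n}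

lemma active_three (hN : ∀ l, l ≠ i → l ≠ j → l ≠ k → topObj (P l) = l)
    (hi : topObj (P i) ≠ i) (hj : topObj (P j) ≠ j) (hk : topObj (P k) ≠ k) :
    activeAgents P = {i, j, k} := by
  ext l
  simp only [activeAgents, Finset.mem_filter, Finset.mem_univ, true_and, Finset.mem_insert,
    Finset.mem_singleton]
  constructor
  · intro h
    by_contra hc
    push Not at hc
    exact h (hN l hc.1 hc.2.1 hc.2.2)
  · rintro (rfl | rfl | rfl) <;> assumption

lemma null_keeps (hir : IndRational D f) (hP : inD D P) {l : Fin n} (hl : topObj (P l) = l) :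
    f P l = l := by
  have h := hir P hP l
  have e : P l l = 0 := by
    have h0 := (P l).apply_symm_apply 0
    rwa [show (P l).symm 0 = l from hl] at h0
  simp only [weakPref] at h
  rw [e, nonpos_iff_eq_zero] at h
  exact (P l).injective (h.trans e.symm)

/-- When everyone outside `{i, j, k}` is null, `f` permutes `i`, `j`, `k`. -/
lemma three_mem (hrule : IsRule D f) (hir : IndRational D f) (hP : inD D P)
    (hN : ∀ l, l ≠ i → l ≠ j → l ≠ k → topObj (P l) = l) {a : Fin n}
    (ha : a = i ∨ a = j ∨ a = k) : f P a = i ∨ f P a = j ∨ f P a = k := by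
  by_contra hc
  push Not at hc
  have h := null_keeps hir hP (hN _ hc.1 hc.2.1 hc.2.2)
  have := (hrule P hP).injective h
  rw [this] at hc
  tauto

/-- Equity for three active agents: if `a` is the favourite active object of `b` and `c`, then `a`
receives her favourite active object `t`, provided that `t` is not her own. -/
lemma equity_three (hequity : EquityUA D f) (hP : inD D P) {a b c : Fin n}
    (hact : activeAgents P = {a, b, c}) (hab : a ≠ b) (hac : a ≠ c) (hbc : b ≠ c)
    {t : Fin n} (ht : t = b ∨ t = c) (htb : P a t ≤ P a b) (htc : P a t ≤ P a c)
    (hta : P a t ≤ P a a)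
    (hb1 : P b a ≤ P b b) (hb2 : P b a ≤ P b c)
    (hc1 : P c a ≤ P c b) (hc2 : P c a ≤ P c c) : f P a = t := by
  have hba : best (P a) (activeAgents P) = t := by
    rw [hact]
    apply best_eq
    · rcases ht with rfl | rfl <;> simp
    · simp only [Finset.mem_insert, Finset.mem_singleton]
      rintro y (rfl | rfl | rfl) <;> assumption
  rw [← hba]
  refine hequity P hP a ⟨?_, ?_, ?_, ?_⟩
  · rw [hact, Finset.card_eq_three.mpr ⟨a, b, c, hab, hac, hbc, rfl⟩]; omega
  · rw [hact]; simp
  · rw [hba]; rcases ht with rfl | rfl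
    exacts [hab.symm, hac.symm]
  · intro l hl hla
    rw [hact] at hl ⊢
    apply best_eq (by simp)
    simp only [Finset.mem_insert, Finset.mem_singleton] at hl ⊢
    rcases hl with rfl | rfl | rfl
    · exact absurd rfl hla
    · rintro y (rfl | rfl | rfl) <;> first | assumption | exact le_rfl
    · rintro y (rfl | rfl | rfl) <;> first | assumption | exact le_rfl

/-- Efficiency for three active agents: if the cycle `i → j → k → i` gives each of them her best
object, it is carried out. -/
lemma cycle_three (hrule : IsRule D f) (heff : Efficient D f) (hir : IndRational D f)
    (hP : inD D P) (hN : ∀ l, l ≠ i → l ≠ j → l ≠ k → topObj (P l) = l)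
    (hij : i ≠ j) (hik : i ≠ k) (hjk : j ≠ k)
    (hi : ∀ o, o = i ∨ o = j ∨ o = k → P i j ≤ P i o)
    (hj : ∀ o, o = i ∨ o = j ∨ o = k → P j k ≤ P j o)
    (hk : ∀ o, o = i ∨ o = j ∨ o = k → P k i ≤ P k o) :
    f P i = j ∧ f P j = k ∧ f P k = i := by
  let m : Fin n → Fin n := fun l => if l = i then j else if l = j then k else if l = k then i else l
  have hmi : m i = j := by simp [m]
  have hmj : m j = k := by simp [m, hij.symm]
  have hmk : m k = i := by simp [m, hik.symm, hjk.symm]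
  have hbij : Function.Bijective m := by
    rw [← Finite.injective_iff_bijective]
    intro a b
    simp only [m]
    grind
  have hw : ∀ l, weakPref (P l) (m l) (f P l) := by
    intro l
    have hmem := three_mem (a := l) hrule hir hP hN
    by_cases h1 : l = i
    · subst h1; rw [hmi]; exact hi _ (hmem (by simp))
    by_cases h2 : l = j
    · subst h2; rw [hmj]; exact hj _ (hmem (by simp))
    by_cases h3 : l = k
    · subst h3; rw [hmk]; exact hk _ (hmem (by simp))
    rw [null_keeps hir hP (hN l h1 h2 h3)]
    simp [m, h1, h2, h3, weakPref]
  have heq : ∀ l, f P l = m l := by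
    intro l
    by_contra hne
    refine heff P hP ⟨m, hbij, hw, l, lt_of_le_of_ne (hw l) fun h => hne ?_⟩
    exact ((P l).injective h).symm
  exact ⟨(heq i).trans hmi, (heq j).trans hmj, (heq k).trans hmk⟩

end Market

/-! ### Excluding the forbidden preference -/

lemma restr_of_connected (n : ℕ) [NeZero n] (hn : 3 ≤ n) (D : Set (Pref n))
    (hpath : pathConnected D) (f : (Fin n → Pref n) → (Fin n → Fin n))
    (hrule : IsRule D f) (heff : Efficient D f) (hir : IndRational D f)
    (hosp : OSP D f) (hequity : EquityUA D f)
    (i j k : Fin n) (hij : i ≠ j) (hik : i ≠ k) (hjk : j ≠ k)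
    (h1 : connectedObj D i j) (h2 : connectedObj D j k) :
    RestrR D i j k := by
  intro p hp hbest
  by_contra hnot
  obtain ⟨-, -, A, hA, -, -, hA1, hA2⟩ := h1
  obtain ⟨-, -, B, hB, -, -, hB1, hB2⟩ := h2
  obtain ⟨A1, A2⟩ := top_second_lt hn hA1 hA2 hjk hik
  obtain ⟨B1, B2⟩ := top_second_lt hn hB1 hB2 hik.symm hij.symm
  have p2 : p k < p j :=
    lt_of_le_of_ne (not_lt.mp hnot) fun h => hjk (p.injective h).symm
  have p1 : p i < p k := by
    have := (best_spec p (S := {i, j, k}) (by simp)).2 k (by simp)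
    rw [hbest] at this
    exact lt_of_le_of_ne this fun h => hik (p.injective h)
  have hex : ∀ l, ∃ q ∈ D, topObj q = l := by
    intro l
    by_cases hl : l = i
    · exact exists_top hpath l (o' := j) (hl ▸ hij)
    · exact exists_top hpath l hl
  choose N hND hNtop using hex
  have ei : ∀ q r s, prof3 N i j k q r s i = q := by intros; simp [prof3]
  have ej : ∀ q r s, prof3 N i j k q r s j = r := by intros; simp [prof3, hij.symm]
  have ek : ∀ q r s, prof3 N i j k q r s k = s := by
    intros; simp [prof3, hik.symm, hjk.symm]
  have en : ∀ q r s l, l ≠ i → l ≠ j → l ≠ k → prof3 N i j k q r s l = N l := by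
    intro q r s l a b c; simp [prof3, a, b, c]
  have hnull : ∀ q r s l, l ≠ i → l ≠ j → l ≠ k → topObj (prof3 N i j k q r s l) = l := by
    intro q r s l a b c; rw [en q r s l a b c]; exact hNtop l
  have hin : ∀ q ∈ D, ∀ r ∈ D, ∀ s ∈ D, inD D (prof3 N i j k q r s) := by
    intro q hq r hr s hs l
    unfold prof3
    split_ifs
    exacts [hq, hr, hs, hND l]
  have hmem : ∀ q ∈ D, ∀ r ∈ D, ∀ s ∈ D, ∀ a, (a = i ∨ a = j ∨ a = k) →
      f (prof3 N i j k q r s) a = i ∨ f (prof3 N i j k q r s) a = j ∨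
        f (prof3 N i j k q r s) a = k := fun q hq r hr s hs a ha =>
    three_mem hrule hir (hin q hq r hr s hs) (hnull q r s) ha
  have hinj : ∀ q ∈ D, ∀ r ∈ D, ∀ s ∈ D, Function.Injective (f (prof3 N i j k q r s)) :=
    fun q hq r hr s hs => (hrule _ (hin q hq r hr s hs)).injective
  have hIR := fun q hq r hr s hs => hir _ (hin q hq r hr s hs)
  simp only [IRAt, weakPref] at hIR
  -- The cycle `i → j → k → i` gives each of the three her favourite.
  have fa : f (prof3 N i j k A B p) i = j ∧ f (prof3 N i j k A B p) j = k ∧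
      f (prof3 N i j k A B p) k = i := by
    apply cycle_three hrule heff hir (hin A hA B hB p hp) (hnull A B p) hij hik hjk
    · rw [ei]; rintro o (rfl | rfl | rfl) <;> order
    · rw [ej]; rintro o (rfl | rfl | rfl) <;> order
    · rw [ek]; rintro o (rfl | rfl | rfl) <;> order
  -- `k` is acclaimed and takes `j`; individual rationality then leaves `k` to `j`.
  have fb : f (prof3 N i j k B B A) i = i := by
    have hk : f (prof3 N i j k B B A) k = j := by
      have hact := active_three (hnull B B A) (by rw [ei]; exact topObj_ne B2)
        (by rw [ej]; exact topObj_ne B1) (by rw [ek]; exact topObj_ne A2)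
      refine equity_three hequity (hin B hB B hB A hA) (a := k) (b := i) (c := j)
        (by rw [hact]; ext; simp; tauto) hik.symm hjk.symm hij (Or.inr rfl)
        ?_ ?_ ?_ ?_ ?_ ?_ ?_ <;> simp only [ei, ej, ek] <;> order
    have hj : f (prof3 N i j k B B A) j = k := by
      have h := hIR B hB B hB A hA j
      rw [ej] at h
      rcases hmem B hB B hB A hA j (by simp) with e | e | e
      · rw [e] at h; order
      · exact absurd (hinj B hB B hB A hA (e.trans hk.symm)) hjk
      · exact e
    rcases hmem B hB B hB A hA i (by simp) with e | e | e
    · exact e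
    · exact absurd (hinj B hB B hB A hA (e.trans hk.symm)) hik
    · exact absurd (hinj B hB B hB A hA (e.trans hj.symm)) hij
  -- `i` is acclaimed and takes `k`; individual rationality then leaves `i` to `k`.
  have fc : f (prof3 N i j k B p p) j = j := by
    have hi : f (prof3 N i j k B p p) i = k := by
      have hact := active_three (hnull B p p) (by rw [ei]; exact topObj_ne B2)
        (by rw [ej]; exact topObj_ne p2) (by rw [ek]; exact topObj_ne p1)
      refine equity_three hequity (hin B hB p hp p hp) (a := i) (b := j) (c := k)
        hact hij hik hjk (Or.inr rfl)
        ?_ ?_ ?_ ?_ ?_ ?_ ?_ <;> simp only [ei, ej, ek] <;> order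
    have hk : f (prof3 N i j k B p p) k = i := by
      have h := hIR B hB p hp p hp k
      rw [ek] at h
      rcases hmem B hB p hp p hp k (by simp) with e | e | e
      · exact e
      · rw [e] at h; order
      · exact absurd (hinj B hB p hp p hp (e.trans hi.symm)) hik.symm
    rcases hmem B hB p hp p hp j (by simp) with e | e | e
    · exact absurd (hinj B hB p hp p hp (e.trans hk.symm)) hjk
    · exact e
    · exact absurd (hinj B hB p hp p hp (e.trans hi.symm)) hij.symm
  -- `j` is acclaimed and takes `i`; individual rationality then leaves `j` to `i`.
  have fd : f (prof3 N i j k A p A) k = k := by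
    have hj : f (prof3 N i j k A p A) j = i := by
      have hact := active_three (hnull A p A) (by rw [ei]; exact topObj_ne A1)
        (by rw [ej]; exact topObj_ne p2) (by rw [ek]; exact topObj_ne A2)
      refine equity_three hequity (hin A hA p hp A hA) (a := j) (b := i) (c := k)
        (by rw [hact]; ext; simp; tauto) hij.symm hjk hik (Or.inl rfl)
        ?_ ?_ ?_ ?_ ?_ ?_ ?_ <;> simp only [ei, ej, ek] <;> order
    have hi : f (prof3 N i j k A p A) i = j := by
      have h := hIR A hA p hp A hA i
      rw [ei] at h
      rcases hmem A hA p hp A hA i (by simp) with e | e | e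
      · exact absurd (hinj A hA p hp A hA (e.trans hj.symm)) hij
      · exact e
      · rw [e] at h; order
    rcases hmem A hA p hp A hA k (by simp) with e | e | e
    · exact absurd (hinj A hA p hp A hA (e.trans hj.symm)) hjk.symm
    · exact absurd (hinj A hA p hp A hA (e.trans hi.symm)) hik.symm
    · exact e
  have hmix : ∀ q r s, (q = A ∨ q = B) → (r = B ∨ r = p) → (s = p ∨ s = A) →
      Mixed (prof3 N i j k A B p) (prof3 N i j k B p A) (prof3 N i j k q r s) := by
    intro q r s hq hr hs l
    unfold prof3
    split_ifs
    exacts [hq, hr, hs, Or.inl rfl]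
  have ma := hmix A B p (by simp) (by simp) (by simp)
  have mb := hmix B B A (by simp) (by simp) (by simp)
  have mc := hmix B p p (by simp) (by simp) (by simp)
  have md := hmix A p A (by simp) (by simp) (by simp)
  rcases osp_split hosp _ _ (hin A hA B hB p hp) (hin B hB p hp A hA) with hc | ⟨l, hl, hc⟩
  · have := congrFun (hc _ mb) i
    rw [fb, fa.1] at this
    exact hij this
  · by_cases li : l = i
    · subst li
      have := (hc _ _ ma mb (by simp only [ei]) (by simp only [ei])).2
      rw [ei, fb, fa.1, weakPref] at this
      order
    by_cases lj : l = j
    · subst lj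
      have := (hc _ _ ma mc (by simp only [ej]) (by simp only [ej])).2
      rw [ej, fc, fa.2.1, weakPref] at this
      order
    by_cases lk : l = k
    · subst lk
      have := (hc _ _ ma md (by simp only [ek]) (by simp only [ek])).2
      rw [ek, fd, fa.2.2, weakPref] at this
      order
    exact hl (by rw [en _ _ _ l li lj lk, en _ _ _ l li lj lk])

lemma connectedObj_symm {n : ℕ} [NeZero n] {D : Set (Pref n)} {o o' : Fin n}
    (h : connectedObj D o o') : connectedObj D o' o := by
  obtain ⟨p, hp, q, hq, a, b, c, d⟩ := h
  exact ⟨q, hq, p, hp, c, d, a, b⟩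

theorem local_relB (n : ℕ) [NeZero n] (hn : 3 ≤ n) (D : Set (Pref n))
    (hrich : richDomain D) (f : (Fin n → Pref n) → (Fin n → Fin n))
    (hrule : IsRule D f) (heff : Efficient D f) (hir : IndRational D f)
    (hosp : OSP D f) (hequity : EquityUA D f)
    (oi oj ok : Fin n) (hij : oi ≠ oj) (hik : oi ≠ ok) (hjk : oj ≠ ok)
    (h1 : connectedObj D oi oj) (h2 : connectedObj D oj ok) :
    RelB D oi oj ok := by
  exact ⟨restr_of_connected n hn D hrich.1 f hrule heff hir hosp hequity oi oj ok hij hik hjk h1 h2,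
    restr_of_connected n hn D hrich.1 f hrule heff hir hosp hequity ok oj oi hjk.symm hik.symm
      hij.symm (connectedObj_symm h2) (connectedObj_symm h1)⟩
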